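/- (Proposition 2.1, 17-point case.) Fix γ > 0, b₁ ∈ ℝ with b₂ = 1 − b₁, and d₁, d₂, d₃ with d₁ + d₂ + d₃ = 1. Let A, B, C, k, u : ℝ² → ℂ be smooth (infinitely differentiable) and fix (x, z) ∈ ℝ². Let L̃ₓu(x, z; h) be the point-weighted flux stencil in the x-direction: with û₋₂ = b₁u(x−2h,z) + (b₂/2)[u(x−2h,z+2γh) + u(x−2h,z−2γh) − u(x,z−2γh) − u(x,z+2γh)], û₋₁ = b₁u(x−h,z) + (b₂/2)[u(x−h,z+γh) + u(x−h,z−γh) − u(x,z−γh) − u(x,z+γh)], û₀ = b₁u(x,z), û₁, û₂ the mirror images of û₋₁, û₋₂ about x, set L̃ₓu = (1/h²)[ −(9/8)A(x−h/2,z)((1/24)û₋₂ − (9/8)û₋₁ + (9/8)û₀ − (1/24)û₁) + (1/24)A(x−3h/2,z)(−(11/12)û₋₂ + (17/24)û₋₁ + (3/8)û₀ − (5/24)û₁ + (1/24)û₂) − (1/24)A(x+3h/2,z)(−(1/24)û₋₂ + (5/24)û₋₁ − (3/8)û₀ − (17/24)û₁ + (11/12)û₂) + (9/8)A(x+h/2,z)((1/24)û₋₁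 − (9/8)û₀ + (9/8)û₁ − (1/24)û₂) ]; let L̃_z u be defined analogously with the roles of x and z interchanged (spacing γh in z in place of h in x, B in place of A, averages formed in the x-direction, divided by (γh)²); and let Ĩ be the weighted mass-lumping operator ĨQ = d₁Q + d₂I⁽²⁾Q + d₃I⁽³⁾Q applied to Q = k²·C·u. Then L̃ₓu(x, z; h) + L̃_z u(x, z; h) + Ĩ(k²Cu)(x, z; h) = [∂/∂x(A ∂u/∂x) + ∂/∂z(B ∂u/∂z) + C k² u](x, z) + O(h⁴) as h → 0⁺; in particular the optimal point-weighting 17-point scheme is pointwise consistent with the Helmholtz-PML equation and is fourth-order accurate. -/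

import Mathlib

noncomputable section

/-- Point-weighted value `û` at `(xo, z)` relative to the center column `xc`,
with vertical half-width `s`. -/
def hatVal (b₁ : ℝ) (u : ℝ × ℝ → ℂ) (xo xc z s : ℝ) : ℂ :=
  (b₁ : ℂ) * u (xo, z) + (((1 : ℂ) - (b₁ : ℂ)) / 2) *
    (u (xo, z + s) + u (xo, z - s) - u (xc, z - s) - u (xc, z + s))

/-- Point-weighted value `p̃` at `(x, zo)` relative to the center row `zc`,
with horizontal half-width `s`. -/
def tildeVal (b₁ : ℝ) (u : ℝ × ℝ → ℂ) (x zo zc s : ℝ) : ℂ :=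
  (b₁ : ℂ) * u (x, zo) + (((1 : ℂ) - (b₁ : ℂ)) / 2) *
    (u (x + s, zo) + u (x - s, zo) - u (x - s, zc) - u (x + s, zc))

/-- The fourth-order flux-form stencil applied to values `vm2, …, vp2`
with coefficient values `Am32, Am12, Ap12, Ap32` and step `h`. -/
def fluxStencil (Am32 Am12 Ap12 Ap32 vm2 vm1 v0 vp1 vp2 : ℂ) (h : ℝ) : ℂ :=
  (1 / (h : ℂ) ^ 2) *
    ( -(9 / 8) * Am12 * ((1 / 24) * vm2 - (9 / 8) * vm1 + (9 / 8) * v0 - (1 / 24) * vp1)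
      + (1 / 24) * Am32 * (-(11 / 12) * vm2 + (17 / 24) * vm1 + (3 / 8) * v0
          - (5 / 24) * vp1 + (1 / 24) * vp2)
      - (1 / 24) * Ap32 * (-(1 / 24) * vm2 + (5 / 24) * vm1 - (3 / 8) * v0
          - (17 / 24) * vp1 + (11 / 12) * vp2)
      + (9 / 8) * Ap12 * ((1 / 24) * vm1 - (9 / 8) * v0 + (9 / 8) * vp1 - (1 / 24) * vp2) )

/-- The x-part `L̃ₓ` of the optimal point-weighting 17-point scheme. -/
def LxTilde (b₁ γ : ℝ) (A u : ℝ × ℝ → ℂ) (x z h : ℝ) : ℂ :=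
  fluxStencil (A (x - 3 * h / 2, z)) (A (x - h / 2, z)) (A (x + h / 2, z))
    (A (x + 3 * h / 2, z))
    (hatVal b₁ u (x - 2 * h) x z (2 * γ * h)) (hatVal b₁ u (x - h) x z (γ * h))
    ((b₁ : ℂ) * u (x, z))
    (hatVal b₁ u (x + h) x z (γ * h)) (hatVal b₁ u (x + 2 * h) x z (2 * γ * h)) h

/-- The z-part `L̃_z` of the optimal point-weighting 17-point scheme
(roles of x and z interchanged; z-spacing γh, coefficient `B`). -/
def LzTilde (b₁ γ : ℝ) (B u : ℝ × ℝ → ℂ) (x z h : ℝ) : ℂ :=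
  fluxStencil (B (x, z - 3 * γ * h / 2)) (B (x, z - γ * h / 2)) (B (x, z + γ * h / 2))
    (B (x, z + 3 * γ * h / 2))
    (tildeVal b₁ u x (z - 2 * γ * h) z (2 * h)) (tildeVal b₁ u x (z - γ * h) z h)
    ((b₁ : ℂ) * u (x, z))
    (tildeVal b₁ u x (z + γ * h) z h) (tildeVal b₁ u x (z + 2 * γ * h) z (2 * h)) (γ * h)

/-- The orthogonal-neighbor mass-lumping operator `I⁽²⁾`. -/
def I2 (γ : ℝ) (Q : ℝ × ℝ → ℂ) (x z h : ℝ) : ℂ :=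
  (1 / 3) * (Q (x - h, z) + Q (x + h, z) + Q (x, z - γ * h) + Q (x, z + γ * h))
    - (1 / 12) * (Q (x - 2 * h, z) + Q (x + 2 * h, z)
        + Q (x, z - 2 * γ * h) + Q (x, z + 2 * γ * h))

/-- The diagonal-neighbor mass-lumping operator `I⁽³⁾`. -/
def I3 (γ : ℝ) (Q : ℝ × ℝ → ℂ) (x z h : ℝ) : ℂ :=
  (1 / 3) * (Q (x - h, z - γ * h) + Q (x + h, z + γ * h)
      + Q (x - h, z + γ * h) + Q (x + h, z - γ * h))
    - (1 / 12) * (Q (x - 2 * h, z - 2 * γ * h) + Q (x + 2 * h, z + 2 * γ * h)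
        + Q (x - 2 * h, z + 2 * γ * h) + Q (x + 2 * h, z - 2 * γ * h))

/-- The weighted mass-lumping operator `Ĩ` of the point-weighting 17-point scheme. -/
def Itilde (γ d₁ d₂ d₃ : ℝ) (Q : ℝ × ℝ → ℂ) (x z h : ℝ) : ℂ :=
  (d₁ : ℂ) * Q (x, z) + (d₂ : ℂ) * I2 γ Q x z h + (d₃ : ℂ) * I3 γ Q x z h

open Asymptotics Filter Topology

theorem taylor5 (f : ℝ → ℂ) (hf : ContDiff ℝ (⊤ : ℕ∞) f) : ∃ c3 c4 c5 : ℂ,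
    (fun t : ℝ => f t - (f 0 + deriv f 0 * t + deriv (deriv f) 0 / 2 * (t:ℂ)^2 + c3 * (t:ℂ)^3
      + c4 * (t:ℂ)^4 + c5 * (t:ℂ)^5)) =O[𝓝 0] fun t : ℝ => t ^ 6 := by
  have h := (taylor_isLittleO_univ (x₀ := 0) (n := 6) (contDiff_infty.1 hf 6)).isBigO
  simp only [taylorWithinEval_succ, taylor_within_zero_eval, iteratedDerivWithin_univ, sub_zero] at h
  refine ⟨iteratedDeriv 3 f 0 / 6, iteratedDeriv 4 f 0 / 24, iteratedDeriv 5 f 0 / 120, ?_⟩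
  have h6 : (fun t : ℝ => (iteratedDeriv 6 f 0 / 720) * (t:ℂ)^6) =O[𝓝 0] fun t : ℝ => t ^ 6 := by
    apply IsBigO.const_mul_left
    exact IsBigO.of_bound 1 (by simp)
  refine (h.add h6).congr_left fun t => ?_
  simp only [Complex.real_smul, iteratedDeriv_succ, iteratedDeriv_zero]
  push_cast [Nat.factorial]
  ring

theorem bigO_scale {f : ℝ → ℂ} {n : ℕ} (c : ℝ) (hf : f =O[𝓝 0] fun t : ℝ => t ^ n) :
    (fun h : ℝ => f (c * h)) =O[𝓝 0] fun t : ℝ => t ^ n := by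
  have ht : Tendsto (fun h : ℝ => c * h) (𝓝 0) (𝓝 0) := by
    have : Continuous (fun h : ℝ => c * h) := by fun_prop
    simpa using this.tendsto 0
  refine (hf.comp_tendsto ht).trans ?_
  simp only [Function.comp_def, mul_pow]
  exact (isBigO_refl _ _).const_mul_left _

theorem cont_bigO_one {f : ℝ → ℂ} (hf : Continuous f) : f =O[𝓝 0] fun _ : ℝ => (1:ℝ) :=
  (hf.tendsto 0).isBigO_one ℝ

theorem second_deriv (u : ℝ × ℝ → ℂ) (hu : ContDiff ℝ (⊤ : ℕ∞) u) (p v : ℝ × ℝ) :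
    (∀ t : ℝ, HasDerivAt (fun t : ℝ => u (p + t • v)) (fderiv ℝ u (p + t • v) v) t) ∧
    HasDerivAt (fun t : ℝ => fderiv ℝ u (p + t • v) v) (fderiv ℝ (fderiv ℝ u) p v v) 0 := by
  have hl : ∀ t : ℝ, HasDerivAt (fun t : ℝ => p + t • v) v t := fun t => by
    simpa using ((hasDerivAt_id t).smul_const v).const_add p
  have hu' : ContDiff ℝ (⊤ : ℕ∞) (fderiv ℝ u) := hu.fderiv_right (by simp)
  constructor
  · intro t
    exact ((hu.differentiable (by simp)) _).hasFDerivAt.comp_hasDerivAt t (hl t)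
  · have := ((hu'.differentiable (by simp)) (p + (0:ℝ) • v)).hasFDerivAt.comp_hasDerivAt (0:ℝ) (hl 0)
    simpa using this.clm_apply (hasDerivAt_const (0:ℝ) v)

theorem stencil_alg (a0 a1 a2 a3 a4 a5 f0 f1 f2 f3 f4 f5 h rA1 rA2 rA3 rA4 r1 r2 r3 r4
    A1 A2 A3 A4 v1 v2 v3 v4 : ℂ)
    (P : ℂ → ℂ) (hP : P = fun t => a0 + a1 * t + a2 * t^2 + a3 * t^3 + a4 * t^4 + a5 * t^5)
    (F : ℂ → ℂ) (hF : F = fun t => f0 + f1 * t + f2 * t^2 + f3 * t^3 + f4 * t^4 + f5 * t^5)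
    (h1 : A1 = P (-3/2*h) + rA1) (h2 : A2 = P (-1/2*h) + rA2)
    (h3 : A3 = P (1/2*h) + rA3) (h4 : A4 = P (3/2*h) + rA4)
    (k1 : v1 = F (-2*h) + r1) (k2 : v2 = F (-1*h) + r2)
    (k3 : v3 = F (1*h) + r3) (k4 : v4 = F (2*h) + r4) :
    ( -(9 / 8) * A2 * ((1 / 24) * v1 - (9 / 8) * v2 + (9 / 8) * f0 - (1 / 24) * v3)
      + (1 / 24) * A1 * (-(11 / 12) * v1 + (17 / 24) * v2 + (3 / 8) * f0
          - (5 / 24) * v3 + (1 / 24) * v4)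
      - (1 / 24) * A4 * (-(1 / 24) * v1 + (5 / 24) * v2 - (3 / 8) * f0
          - (17 / 24) * v3 + (11 / 12) * v4)
      + (9 / 8) * A3 * ((1 / 24) * v2 - (9 / 8) * f0 + (9 / 8) * v3 - (1 / 24) * v4) )
     - h^2 * (a1 * f1 + a0 * (2 * f2)) =
    h^6 * ((-4 / 1) * a1 * f5 * h ^ 0 + (-9 / 4) * a2 * f4 * h ^ 0 + (-27 / 16) * a3 * f3 * h ^ 0 + (-9 / 8) * a4 * f2 * h ^ 0 + (-9 / 16) * a5 * f1 * h ^ 0 + (-135 / 16) * a3 * f5 * h ^ 2 + (-45 / 8) * a4 * f4 * h ^ 2 + (-135 / 32) * a5 * f3 * h ^ 2 + (-603 / 32) * a5 * f5 * h ^ 4)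
    + rA2 * (-(9 / 8) * ((1 / 24) * v1 - (9 / 8) * v2 + (9 / 8) * f0 - (1 / 24) * v3))
    + rA1 * ((1 / 24) * (-(11 / 12) * v1 + (17 / 24) * v2 + (3 / 8) * f0
          - (5 / 24) * v3 + (1 / 24) * v4))
    + rA4 * (- (1 / 24) * (-(1 / 24) * v1 + (5 / 24) * v2 - (3 / 8) * f0
          - (17 / 24) * v3 + (11 / 12) * v4))
    + rA3 * ((9 / 8) * ((1 / 24) * v2 - (9 / 8) * f0 + (9 / 8) * v3 - (1 / 24) * v4))
    + r1 * (-(9/8) * P (-1/2*h) * (1/24) - (1/24) * P (-3/2*h) * (11/12)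
        + (1/24) * P (3/2*h) * (1/24))
    + r2 * ((9/8) * P (-1/2*h) * (9/8) + (1/24) * P (-3/2*h) * (17/24)
        - (1/24) * P (3/2*h) * (5/24) + (9/8) * P (1/2*h) * (1/24))
    + r3 * ((9/8) * P (-1/2*h) * (1/24) - (1/24) * P (-3/2*h) * (5/24)
        + (1/24) * P (3/2*h) * (17/24) + (9/8) * P (1/2*h) * (9/8))
    + r4 * ((1/24) * P (-3/2*h) * (1/24)
        - (1/24) * P (3/2*h) * (11/12) - (9/8) * P (1/2*h) * (1/24)) := by
  have key : ( -(9 / 8) * P (-1/2*h) * ((1 / 24) * F (-2*h) - (9 / 8) * F (-1*h) + (9 / 8) * f0 - (1 / 24) * F (1*h))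
      + (1 / 24) * P (-3/2*h) * (-(11 / 12) * F (-2*h) + (17 / 24) * F (-1*h) + (3 / 8) * f0
          - (5 / 24) * F (1*h) + (1 / 24) * F (2*h))
      - (1 / 24) * P (3/2*h) * (-(1 / 24) * F (-2*h) + (5 / 24) * F (-1*h) - (3 / 8) * f0
          - (17 / 24) * F (1*h) + (11 / 12) * F (2*h))
      + (9 / 8) * P (1/2*h) * ((1 / 24) * F (-1*h) - (9 / 8) * f0 + (9 / 8) * F (1*h) - (1 / 24) * F (2*h)) )
     - h^2 * (a1 * f1 + a0 * (2 * f2)) =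
    h^6 * ((-4 / 1) * a1 * f5 * h ^ 0 + (-9 / 4) * a2 * f4 * h ^ 0 + (-27 / 16) * a3 * f3 * h ^ 0 + (-9 / 8) * a4 * f2 * h ^ 0 + (-9 / 16) * a5 * f1 * h ^ 0 + (-135 / 16) * a3 * f5 * h ^ 2 + (-45 / 8) * a4 * f4 * h ^ 2 + (-135 / 32) * a5 * f3 * h ^ 2 + (-603 / 32) * a5 * f5 * h ^ 4) := by
    subst hP hF
    ring
  rw [← key, h1, h2, h3, h4, k1, k2, k3, k4]
  ring

theorem stencil_bigO (a F : ℝ → ℂ) (ha : ContDiff ℝ (⊤ : ℕ∞) a) (hF : ContDiff ℝ (⊤ : ℕ∞) F) :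
    (fun h : ℝ => fluxStencil (a (-3/2*h)) (a (-1/2*h)) (a (1/2*h)) (a (3/2*h))
      (F (-2*h)) (F (-1*h)) (F 0) (F (1*h)) (F (2*h)) h
      - (deriv a 0 * deriv F 0 + a 0 * deriv (deriv F) 0)) =O[𝓝[>] 0] fun h : ℝ => h ^ 4 := by
  obtain ⟨a3, a4, a5, hA⟩ := taylor5 a ha
  obtain ⟨f3, f4, f5, hf⟩ := taylor5 F hF
  set P : ℂ → ℂ := fun t => a 0 + deriv a 0 * t + (deriv (deriv a) 0 / 2) * t^2 + a3 * t^3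
    + a4 * t^4 + a5 * t^5 with hP
  set G : ℂ → ℂ := fun t => F 0 + deriv F 0 * t + (deriv (deriv F) 0 / 2) * t^2 + f3 * t^3
    + f4 * t^4 + f5 * t^5 with hG
  have hPc : Continuous P := by rw [hP]; fun_prop
  have hFc : Continuous F := hF.continuous
  change (fun t : ℝ => a t - P t) =O[𝓝 0] _ at hA
  change (fun t : ℝ => F t - G t) =O[𝓝 0] _ at hf
  have mulO : ∀ {r g : ℝ → ℂ}, r =O[𝓝 0] (fun t : ℝ => t ^ 6) → Continuous g →
      (fun h => r h * g h) =O[𝓝 0] (fun t : ℝ => t ^ 6) := by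
    intro r g hr hg
    simpa using hr.mul (cont_bigO_one hg)
  have h6 : (fun t : ℝ => (t:ℂ)^6) =O[𝓝 0] fun t : ℝ => t ^ 6 := IsBigO.of_bound 1 (by simp)
  have hnum := (((((((((mulO h6 (g := fun h : ℝ => (-4 / 1) * deriv a 0 * f5 * (h:ℂ) ^ 0 + (-9 / 4) * (deriv (deriv a) 0 / 2) * f4 * (h:ℂ) ^ 0 + (-27 / 16) * a3 * f3 * (h:ℂ) ^ 0 + (-9 / 8) * a4 * (deriv (deriv F) 0 / 2) * (h:ℂ) ^ 0 + (-9 / 16) * a5 * deriv F 0 * (h:ℂ) ^ 0 + (-135 / 16) * a3 * f5 * (h:ℂ) ^ 2 + (-45 / 8) * a4 * f4 * (h:ℂ) ^ 2 + (-135 / 32) * a5 * f3 * (h:ℂ) ^ 2 + (-603 / 32) * a5 * f5 * (h:ℂ) ^ 4) (by fun_prop)).add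
    (mulO (bigO_scale (-1/2) hA) (g := fun h : ℝ => -(9 / 8) * ((1 / 24) * F (-2*h) - (9 / 8) * F (-1*h) + (9 / 8) * F 0 - (1 / 24) * F (1*h))) (by fun_prop))).add
    (mulO (bigO_scale (-3/2) hA) (g := fun h : ℝ => (1 / 24) * (-(11 / 12) * F (-2*h) + (17 / 24) * F (-1*h) + (3 / 8) * F 0 - (5 / 24) * F (1*h) + (1 / 24) * F (2*h))) (by fun_prop))).add
    (mulO (bigO_scale (3/2) hA) (g := fun h : ℝ => - (1 / 24) * (-(1 / 24) * F (-2*h) + (5 / 24) * F (-1*h) - (3 / 8) * F 0 - (17 / 24) * F (1*h) + (11 / 12) * F (2*h))) (by fun_prop))).add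
    (mulO (bigO_scale (1/2) hA) (g := fun h : ℝ => (9 / 8) * ((1 / 24) * F (-1*h) - (9 / 8) * F 0 + (9 / 8) * F (1*h) - (1 / 24) * F (2*h))) (by fun_prop))).add
    (mulO (bigO_scale (-2) hf) (g := fun h : ℝ => -(9/8) * P (-1/2*h) * (1/24) - (1/24) * P (-3/2*h) * (11/12)
        + (1/24) * P (3/2*h) * (1/24)) (by fun_prop))).add
    (mulO (bigO_scale (-1) hf) (g := fun h : ℝ => (9/8) * P (-1/2*h) * (9/8) + (1/24) * P (-3/2*h) * (17/24)
        - (1/24) * P (3/2*h) * (5/24) + (9/8) * P (1/2*h) * (1/24)) (by fun_prop))).add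
    (mulO (bigO_scale 1 hf) (g := fun h : ℝ => (9/8) * P (-1/2*h) * (1/24) - (1/24) * P (-3/2*h) * (5/24)
        + (1/24) * P (3/2*h) * (17/24) + (9/8) * P (1/2*h) * (9/8)) (by fun_prop))).add
    (mulO (bigO_scale 2 hf) (g := fun h : ℝ => (1/24) * P (-3/2*h) * (1/24)
        - (1/24) * P (3/2*h) * (11/12) - (9/8) * P (1/2*h) * (1/24)) (by fun_prop)))
  have hinv : (fun h : ℝ => 1 / (h:ℂ)^2) =O[𝓝[>] 0] fun h : ℝ => 1 / h ^ 2 :=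
    IsBigO.of_bound 1 (by simp)
  refine (hinv.mul (hnum.mono nhdsWithin_le_nhds)).congr' ?_ ?_
  · filter_upwards [self_mem_nhdsWithin] with h hh
    have hne : (h:ℂ) ≠ 0 := by exact_mod_cast (ne_of_gt hh)
    rw [← stencil_alg (a 0) (deriv a 0) (deriv (deriv a) 0 / 2) a3 a4 a5 (F 0) (deriv F 0)
      (deriv (deriv F) 0 / 2) f3 f4 f5 h _ _ _ _ _ _ _ _ (a (-3/2*h)) (a (-1/2*h)) (a (1/2*h))
      (a (3/2*h)) _ _ _ _ P hP G hG
      (by push_cast; ring) (by push_cast; ring) (by push_cast; ring) (by push_cast; ring)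
      (by push_cast; ring) (by push_cast; ring) (by push_cast; ring) (by push_cast; ring)]
    unfold fluxStencil
    field_simp
  · filter_upwards [self_mem_nhdsWithin] with h hh
    have hne : h ≠ 0 := (ne_of_gt hh)
    field_simp

theorem mass_bigO (q : ℝ → ℂ) (hq : ContDiff ℝ (⊤ : ℕ∞) q) :
    (fun h : ℝ => (1/3) * (q (-1*h) + q (1*h)) - (1/12) * (q (-2*h) + q (2*h)) - (1/2) * q 0)
      =O[𝓝[>] 0] fun h : ℝ => h ^ 4 := by
  obtain ⟨c3, c4, c5, hA⟩ := taylor5 q hq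
  have h64 : (fun h : ℝ => h ^ 6) =O[𝓝 0] fun h : ℝ => h ^ 4 := (isLittleO_pow_pow (by norm_num)).isBigO
  have hA' := hA.trans h64
  have h4 : (fun t : ℝ => (-2 * c4) * (t:ℂ)^4) =O[𝓝 0] fun t : ℝ => t ^ 4 :=
    (IsBigO.of_bound 1 (by simp)).const_mul_left _
  have := ((((bigO_scale (-1) hA').add (bigO_scale 1 hA')).const_mul_left (1/3)).sub
    (((bigO_scale (-2) hA').add (bigO_scale 2 hA')).const_mul_left (1/12))).add h4
  refine (this.congr_left fun h => ?_).mono nhdsWithin_le_nhds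
  push_cast
  ring

/-- The curve whose values are the point-weighted values. -/
def curveF (b : ℝ) (u : ℝ × ℝ → ℂ) (p e w : ℝ × ℝ) (t : ℝ) : ℂ :=
  (b : ℂ) * u (p + t • e) + (((1 : ℂ) - (b : ℂ)) / 2) *
    (u (p + t • (e + w)) + u (p + t • (e - w)) - u (p + t • (-w)) - u (p + t • w))

theorem line_smooth (u : ℝ × ℝ → ℂ) (hu : ContDiff ℝ (⊤ : ℕ∞) u) (p v : ℝ × ℝ) :
    ContDiff ℝ (⊤ : ℕ∞) fun t : ℝ => u (p + t • v) := by fun_prop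

theorem curveF_smooth (b : ℝ) (u : ℝ × ℝ → ℂ) (hu : ContDiff ℝ (⊤ : ℕ∞) u) (p e w : ℝ × ℝ) :
    ContDiff ℝ (⊤ : ℕ∞) (curveF b u p e w) := by
  unfold curveF; fun_prop

theorem curveF_deriv (b : ℝ) (u : ℝ × ℝ → ℂ) (hu : ContDiff ℝ (⊤ : ℕ∞) u) (p e w : ℝ × ℝ) :
    deriv (curveF b u p e w) 0 = fderiv ℝ u p e ∧
    deriv (deriv (curveF b u p e w)) 0 = fderiv ℝ (fderiv ℝ u) p e e := by
  have hd := fun v => second_deriv u hu p v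
  have h1 : deriv (curveF b u p e w) = fun t : ℝ => (b : ℂ) * fderiv ℝ u (p + t • e) e
      + (((1 : ℂ) - (b : ℂ)) / 2) *
      (fderiv ℝ u (p + t • (e + w)) (e + w) + fderiv ℝ u (p + t • (e - w)) (e - w)
        - fderiv ℝ u (p + t • (-w)) (-w) - fderiv ℝ u (p + t • w) w) := by
    funext t
    exact ((((hd e).1 t).const_mul (b:ℂ)).add ((((((hd (e+w)).1 t).add ((hd (e-w)).1 t)).sub
      ((hd (-w)).1 t)).sub ((hd w).1 t)).const_mul (((1 : ℂ) - (b : ℂ)) / 2))).deriv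
  constructor
  · rw [h1]
    simp
    ring
  · rw [h1]
    have h2 := ((((hd e).2).const_mul (b:ℂ)).add ((((((hd (e+w)).2).add ((hd (e-w)).2)).sub
      ((hd (-w)).2)).sub ((hd w).2)).const_mul (((1 : ℂ) - (b : ℂ)) / 2))).deriv
    refine h2.trans ?_
    simp
    ring

theorem flux_deriv (A u : ℝ × ℝ → ℂ) (hA : ContDiff ℝ (⊤ : ℕ∞) A) (hu : ContDiff ℝ (⊤ : ℕ∞) u)
    (p e : ℝ × ℝ) :
    deriv (fun t : ℝ => A (p + t • e) * deriv (fun s : ℝ => u (p + s • e)) t) 0 =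
      deriv (fun t : ℝ => A (p + t • e)) 0 * fderiv ℝ u p e
        + A (p + (0:ℝ) • e) * fderiv ℝ (fderiv ℝ u) p e e := by
  have h1 : deriv (fun s : ℝ => u (p + s • e)) = fun t : ℝ => fderiv ℝ u (p + t • e) e := by
    funext t; exact ((second_deriv u hu p e).1 t).deriv
  rw [h1]
  have h2 := (((line_smooth A hA p e).differentiable (by simp)) 0).hasDerivAt.mul
    (second_deriv u hu p e).2
  refine h2.deriv.trans ?_
  simp

theorem Lgen_bigO (b : ℝ) (A u : ℝ × ℝ → ℂ) (hA : ContDiff ℝ (⊤ : ℕ∞) A)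
    (hu : ContDiff ℝ (⊤ : ℕ∞) u) (p e w : ℝ × ℝ) :
    (fun h : ℝ => fluxStencil (A (p + (-3/2*h) • e)) (A (p + (-1/2*h) • e))
      (A (p + (1/2*h) • e)) (A (p + (3/2*h) • e))
      (curveF b u p e w (-2*h)) (curveF b u p e w (-1*h)) (curveF b u p e w 0)
      (curveF b u p e w (1*h)) (curveF b u p e w (2*h)) h
      - deriv (fun t : ℝ => A (p + t • e) * deriv (fun s : ℝ => u (p + s • e)) t) 0)
      =O[𝓝[>] 0] fun h : ℝ => h ^ 4 := by
  have := stencil_bigO _ _ (line_smooth A hA p e) (curveF_smooth b u hu p e w)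
  rw [(curveF_deriv b u hu p e w).1, (curveF_deriv b u hu p e w).2,
    ← flux_deriv A u hA hu p e] at this
  exact this

theorem Lx_bigO (b γ : ℝ) (A u : ℝ × ℝ → ℂ) (hA : ContDiff ℝ (⊤ : ℕ∞) A)
    (hu : ContDiff ℝ (⊤ : ℕ∞) u) (x z : ℝ) :
    (fun h : ℝ => LxTilde b γ A u x z h
      - deriv (fun t => A (t, z) * deriv (fun s => u (s, z)) t) x)
      =O[𝓝[>] 0] fun h : ℝ => h ^ 4 := by
  refine (Lgen_bigO b A u hA hu (x, z) (1, 0) (0, γ)).congr_left fun h => ?_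
  congr 1
  · unfold LxTilde curveF hatVal
    simp only [Prod.smul_mk, Prod.mk_add_mk, Prod.mk_sub_mk, Prod.neg_mk, smul_eq_mul]
    congr 1 <;> ring_nf
  · simp only [Prod.smul_mk, Prod.mk_add_mk, smul_eq_mul, mul_one, mul_zero, add_zero]
    have h1 : ∀ t, deriv (fun s => u (x + s, z)) t = deriv (fun s => u (s, z)) (x + t) := fun t =>
      deriv_comp_const_add (fun s => u (s, z)) x t
    simp only [h1]
    simpa using deriv_comp_const_add (fun t => A (t, z) * deriv (fun s => u (s, z)) t) x 0

theorem Lz_bigO (b γ : ℝ) (hγ : 0 < γ) (A u : ℝ × ℝ → ℂ) (hA : ContDiff ℝ (⊤ : ℕ∞) A)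
    (hu : ContDiff ℝ (⊤ : ℕ∞) u) (x z : ℝ) :
    (fun h : ℝ => LzTilde b γ A u x z h
      - deriv (fun t => A (x, t) * deriv (fun s => u (x, s)) t) z)
      =O[𝓝[>] 0] fun h : ℝ => h ^ 4 := by
  have ht : Tendsto (fun h : ℝ => γ * h) (𝓝[>] 0) (𝓝[>] 0) := by
    refine tendsto_nhdsWithin_iff.2 ⟨?_, ?_⟩
    · have : Continuous (fun h : ℝ => γ * h) := by fun_prop
      exact (by simpa using this.tendsto 0 : Tendsto (fun h : ℝ => γ * h) (𝓝 0) (𝓝 0)).mono_left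
        nhdsWithin_le_nhds
    · filter_upwards [self_mem_nhdsWithin] with h hh
      exact mul_pos hγ hh
  have hne : γ ≠ 0 := hγ.ne'
  have key := (Lgen_bigO b A u hA hu (x, z) (0, 1) (1/γ, 0)).comp_tendsto ht
  have key2 : (fun h : ℝ => (γ * h) ^ 4) =O[𝓝[>] 0] fun h : ℝ => h ^ 4 := by
    simp only [mul_pow]
    exact (isBigO_refl _ _).const_mul_left _
  refine (key.trans key2).congr_left fun h => ?_
  simp only [Function.comp_def]
  have e1 : ∀ c : ℝ, c * (γ * h) * (1/γ) = c * h := fun c => by field_simp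
  have e2 : ∀ c : ℝ, c * (γ * h) * (-(1/γ)) = -(c * h) := fun c => by field_simp
  congr 1
  · unfold LzTilde curveF tildeVal
    simp only [Prod.smul_mk, Prod.mk_add_mk, Prod.mk_sub_mk, Prod.neg_mk, smul_eq_mul, zero_add,
      zero_sub, e1, e2]
    congr 1 <;> ring_nf
  · simp only [Prod.smul_mk, Prod.mk_add_mk, smul_eq_mul, mul_one, mul_zero, add_zero]
    have h1 : ∀ t, deriv (fun s => u (x, z + s)) t = deriv (fun s => u (x, s)) (z + t) := fun t =>
      deriv_comp_const_add (fun s => u (x, s)) z t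
    simp only [h1]
    simpa using deriv_comp_const_add (fun t => A (x, t) * deriv (fun s => u (x, s)) t) z 0

theorem I_bigO (γ d₁ d₂ d₃ : ℝ) (hd : d₁ + d₂ + d₃ = 1) (Q : ℝ × ℝ → ℂ)
    (hQ : ContDiff ℝ (⊤ : ℕ∞) Q) (x z : ℝ) :
    (fun h : ℝ => Itilde γ d₁ d₂ d₃ Q x z h - Q (x, z)) =O[𝓝[>] 0] fun h : ℝ => h ^ 4 := by
  have m := fun v => mass_bigO _ (line_smooth Q hQ (x, z) v)
  have := (((m (1, 0)).add (m (0, γ))).const_mul_left (d₂ : ℂ)).add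
    (((m (1, γ)).add (m (1, -γ))).const_mul_left (d₃ : ℂ))
  refine this.congr_left fun h => ?_
  have hd' : (d₁ : ℂ) = 1 - d₂ - d₃ := by
    have : d₁ = 1 - d₂ - d₃ := by linarith
    rw [this]; push_cast; ring
  unfold Itilde I2 I3
  rw [hd']
  simp only [Prod.smul_mk, Prod.mk_add_mk, smul_eq_mul]
  ring_nf

/-- Proposition 2.1, 17-point case: the optimal point-weighting
17-point scheme is pointwise consistent with the Helmholtz-PML equation and
fourth-order accurate. -/
theorem pointWeighting17_consistent
    (γ : ℝ) (hγ : 0 < γ) (b₁ : ℝ) (d₁ d₂ d₃ : ℝ) (hd : d₁ + d₂ + d₃ = 1)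
    (A B C k u : ℝ × ℝ → ℂ)
    (hA : ContDiff ℝ (⊤ : ℕ∞) A) (hB : ContDiff ℝ (⊤ : ℕ∞) B) (hC : ContDiff ℝ (⊤ : ℕ∞) C)
    (hk : ContDiff ℝ (⊤ : ℕ∞) k) (hu : ContDiff ℝ (⊤ : ℕ∞) u) (x z : ℝ) :
    ∃ M δ : ℝ, 0 < M ∧ 0 < δ ∧ ∀ h : ℝ, 0 < h → h < δ →
      ‖LxTilde b₁ γ A u x z h + LzTilde b₁ γ B u x z h
          + Itilde γ d₁ d₂ d₃ (fun p => k p ^ 2 * C p * u p) x z h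
        - (deriv (fun t => A (t, z) * deriv (fun s => u (s, z)) t) x
            + deriv (fun t => B (x, t) * deriv (fun s => u (x, s)) t) z
            + C (x, z) * k (x, z) ^ 2 * u (x, z))‖ ≤ M * h ^ 4 := by
  have hQ : ContDiff ℝ (⊤ : ℕ∞) (fun p => k p ^ 2 * C p * u p) := by fun_prop
  have H := ((Lx_bigO b₁ γ A u hA hu x z).add (Lz_bigO b₁ γ hγ B u hB hu x z)).add
    (I_bigO γ d₁ d₂ d₃ hd _ hQ x z)
  obtain ⟨M, hM, hb⟩ := H.exists_pos
  rw [IsBigOWith] at hb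
  obtain ⟨δ, hδ, hball⟩ := (mem_nhdsGT_iff_exists_Ioo_subset.1 hb)
  refine ⟨M, δ, hM, hδ, fun h h0 h1 => ?_⟩
  have := hball ⟨h0, h1⟩
  simp only [Set.mem_ofPred_eq] at this
  rw [Real.norm_of_nonneg (by positivity)] at this
  refine le_of_eq_of_le (congrArg norm ?_) this
  ring

end
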